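/- (Kazhikhov-type representation formula.) Let (v, u, θ) be a smooth solution of the Navier-Stokes system with constant viscosity μ̃. Then for each integer k and each x ∈ [k, k+1], v(x,t) = B(x,t)Y(t) + (R/μ̃) ∫₀^t (B(x,t)Y(t))/(B(x,s)Y(s)) · θ(x,s) ds, where B(x,t) = v₀(x) exp((1/μ̃) ∫_x^{+∞} (u₀(y) − u(y,t)) D(y) dy), Y(t) = exp((1/μ̃) ∫₀^t ∫_{k+1}^{k+2} σ(y,s) dy ds), σ = μ̃ u_x/v − Rθ/v, and D(x) = 1 for x ≤ k+1, D(x) = k+2−x for k+1 ≤ x ≤ k+2, D(x) = 0 for x ≥ k+2. -/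

import Mathlib

/-! The momentum equation reads `u_t = σ_x` for `t > 0`. Testing it against the cut-off `D` on
`[x, k+2]` and integrating by parts gives
`d/dt ∫_x^∞ u D = -σ(x,t) + ∫_{k+1}^{k+2} σ`, while the mass equation gives
`σ(x,t) = μ v_t / v - R θ / v`. Hence `(log v)_t = (log (B Y))_t + (R/μ) θ / v`, that is,
`(v / (B Y))_t = (R/μ) θ / (B Y)`. Since `v = B Y` at `t = 0`, integration over `[0,t]` gives the
formula.

Smoothness is only assumed on the closed half-plane `t ≥ 0`. The spatial derivative `pdx` is taken
along the boundary and stays smooth there (`contDiffOn_pdx`); time derivatives are only used for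
`t > 0`, and continuity up to `t = 0` is obtained by precomposing with `t ↦ max t 0`. -/

noncomputable section
open MeasureTheory Real Filter Topology Set

/-- Spatial partial derivative of a function `f(x,t)`. -/
def pdx (f : ℝ → ℝ → ℝ) (x t : ℝ) : ℝ := deriv (fun y => f y t) x

/-- Temporal partial derivative of a function `f(x,t)`. -/
def pdt (f : ℝ → ℝ → ℝ) (x t : ℝ) : ℝ := deriv (fun s => f x s) t

/-- The 1-D compressible Navier–Stokes system in Lagrangian coordinates with
constant viscosity `μ` and heat conductivity `κ θ^β`, for all `t > 0`. -/
def NSAll (μ κ R cν β : ℝ) (v u θ : ℝ → ℝ → ℝ) : Prop :=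
  ∀ x t : ℝ, 0 < t →
    pdt v x t = pdx u x t ∧
    pdt u x t + pdx (fun y s => R * θ y s / v y s) x t
      = μ * pdx (fun y s => pdx u y s / v y s) x t ∧
    pdt (fun y s => cν * θ y s + u y s ^ 2 / 2) x t
        + pdx (fun y s => R * θ y s / v y s * u y s) x t
      = pdx (fun y s => κ * θ y s ^ β * pdx θ y s / v y s
          + μ * u y s * pdx u y s / v y s) x t

/-- The cut-off function `D` adapted to the unit interval `[k, k+1]`. -/
def Dcut (k : ℤ) (x : ℝ) : ℝ :=
  if x ≤ (k : ℝ) + 1 then 1 else if x ≤ (k : ℝ) + 2 then (k : ℝ) + 2 - x else 0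

/-- `σ = μ u_x / v - R θ / v`. -/
def sigmaNS (μ R : ℝ) (v u θ : ℝ → ℝ → ℝ) (y s : ℝ) : ℝ :=
  μ * pdx u y s / v y s - R * θ y s / v y s

/-- `B(x,t) = v₀(x) exp((1/μ) ∫_x^{∞} (u₀(y) - u(y,t)) D(y) dy)`. -/
def Bfun (μ : ℝ) (v u : ℝ → ℝ → ℝ) (k : ℤ) (x t : ℝ) : ℝ :=
  v x 0 * Real.exp ((1 / μ) * ∫ y in Ioi x, (u y 0 - u y t) * Dcut k y)

/-- `Y(t) = exp((1/μ) ∫₀^t ∫_{k+1}^{k+2} σ(y,s) dy ds)`. -/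
def Yfun (μ R : ℝ) (v u θ : ℝ → ℝ → ℝ) (k : ℤ) (t : ℝ) : ℝ :=
  Real.exp ((1 / μ) *
    ∫ s in (0 : ℝ)..t, ∫ y in ((k : ℝ) + 1)..((k : ℝ) + 2), sigmaNS μ R v u θ y s)

/-- The closed half-plane `t ≥ 0` in the `(x,t)`-plane. -/
abbrev halfPlane : Set (ℝ × ℝ) := univ ×ˢ Ici 0

lemma mem_halfPlane {x t : ℝ} (ht : 0 ≤ t) : (x, t) ∈ halfPlane := ⟨mem_univ _, ht⟩

lemma uniqueDiffOn_halfPlane : UniqueDiffOn ℝ halfPlane :=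
  uniqueDiffOn_univ.prod (uniqueDiffOn_Ici 0)

lemma hasDerivAt_slice {f : ℝ → ℝ → ℝ}
    (hf : ContDiffOn ℝ (⊤ : ℕ∞) (fun p : ℝ × ℝ => f p.1 p.2) halfPlane) (x : ℝ) {t : ℝ}
    (ht : 0 ≤ t) :
    HasDerivAt (fun y => f y t)
      (fderivWithin ℝ (fun p : ℝ × ℝ => f p.1 p.2) halfPlane (x, t) (1, 0)) x := by
  have h1 := ((hf.differentiableOn (by simp)) (x, t) (mem_halfPlane ht)).hasFDerivWithinAt
  have h2 : HasDerivAt (fun y : ℝ => (y, t)) ((1 : ℝ), (0 : ℝ)) x :=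
    (hasDerivAt_id x).prodMk (hasDerivAt_const x t)
  have h3 := h1.comp_hasDerivWithinAt (s := univ) x h2.hasDerivWithinAt
    (fun y _ => mem_halfPlane ht)
  exact hasDerivWithinAt_univ.mp h3

lemma hasDerivAt_pdx {f : ℝ → ℝ → ℝ}
    (hf : ContDiffOn ℝ (⊤ : ℕ∞) (fun p : ℝ × ℝ => f p.1 p.2) halfPlane) (x : ℝ) {t : ℝ}
    (ht : 0 ≤ t) : HasDerivAt (fun y => f y t) (pdx f x t) x :=
  (hasDerivAt_slice hf x ht).differentiableAt.hasDerivAt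

lemma hasDerivAt_pdt {f : ℝ → ℝ → ℝ}
    (hf : ContDiffOn ℝ (⊤ : ℕ∞) (fun p : ℝ × ℝ => f p.1 p.2) halfPlane) (x : ℝ) {t : ℝ}
    (ht : 0 < t) : HasDerivAt (fun s => f x s) (pdt f x t) t := by
  have hn : halfPlane ∈ 𝓝 (x, t) := prod_mem_nhds univ_mem (Ici_mem_nhds ht)
  have h1 : DifferentiableAt ℝ (fun p : ℝ × ℝ => f p.1 p.2) (x, t) :=
    ((hf.differentiableOn (by simp)) (x, t) (mem_halfPlane ht.le)).differentiableAt hn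
  have h2 : DifferentiableAt ℝ (fun s : ℝ => (x, s)) t := by fun_prop
  exact (DifferentiableAt.comp t h1 h2).hasDerivAt

/-- The spatial derivative of a function smooth on the closed half-plane is smooth there, because
the direction `(1,0)` is tangent to the boundary. -/
lemma contDiffOn_pdx {f : ℝ → ℝ → ℝ}
    (hf : ContDiffOn ℝ (⊤ : ℕ∞) (fun p : ℝ × ℝ => f p.1 p.2) halfPlane) :
    ContDiffOn ℝ (⊤ : ℕ∞) (fun p : ℝ × ℝ => pdx f p.1 p.2) halfPlane := by
  have h := (hf.fderivWithin (m := (⊤ : ℕ∞)) uniqueDiffOn_halfPlane (by simp)).clm_apply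
    (contDiffOn_const (c := ((1 : ℝ), (0 : ℝ))))
  refine h.congr ?_
  rintro ⟨x, t⟩ ⟨-, ht⟩
  exact (hasDerivAt_slice hf x ht).deriv

lemma continuous_comp_max {f : ℝ → ℝ → ℝ}
    (hf : ContinuousOn (fun p : ℝ × ℝ => f p.1 p.2) halfPlane) :
    Continuous (fun p : ℝ × ℝ => f p.1 (max p.2 0)) :=
  hf.comp_continuous (f := fun p : ℝ × ℝ => (p.1, max p.2 0)) (by fun_prop)
    (fun _ => mem_halfPlane (le_max_right _ _))

lemma continuous_slice {f : ℝ → ℝ → ℝ}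
    (hf : ContinuousOn (fun p : ℝ × ℝ => f p.1 p.2) halfPlane) {t : ℝ} (ht : 0 ≤ t) :
    Continuous (fun y => f y t) :=
  hf.comp_continuous (f := fun y : ℝ => (y, t)) (by fun_prop) (fun _ => mem_halfPlane ht)

/-- Differentiation under the integral sign at positive times, against a continuous weight. -/
lemma hasDerivAt_weighted_integral {f f' : ℝ → ℝ → ℝ} {c : ℝ → ℝ} (hc : Continuous c)
    (hf : ContinuousOn (fun p : ℝ × ℝ => f p.1 p.2) halfPlane)
    (hf' : ContinuousOn (fun p : ℝ × ℝ => f' p.1 p.2) halfPlane)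
    (hd : ∀ y t, 0 < t → HasDerivAt (fun s => f y s) (f' y t) t)
    (a b : ℝ) {t : ℝ} (ht : 0 < t) :
    HasDerivAt (fun s => ∫ y in a..b, f y s * c y) (∫ y in a..b, f' y t * c y) t := by
  have hcont : Continuous (fun p : ℝ × ℝ => f' p.1 (max p.2 0) * c p.1) :=
    (continuous_comp_max hf').mul (by fun_prop)
  obtain ⟨C, hC⟩ := (isCompact_uIcc (a := a) (b := b)).prod (isCompact_Icc (a := t / 2) (b := 2 * t))
    |>.exists_bound_of_continuousOn hcont.continuousOn
  have hs : Ioo (t / 2) (2 * t) ∈ 𝓝 t := Ioo_mem_nhds (by linarith) (by linarith)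
  refine (intervalIntegral.hasDerivAt_integral_of_dominated_loc_of_deriv_le
    (F' := fun s y => f' y s * c y) (bound := fun _ => C) hs ?_ ?_ ?_ ?_ ?_ ?_).2
  · filter_upwards [hs] with s h
    exact ((continuous_slice hf (by linarith [h.1])).mul hc).aestronglyMeasurable
  · exact ((continuous_slice hf ht.le).mul hc).intervalIntegrable _ _
  · exact ((continuous_slice hf' ht.le).mul hc).aestronglyMeasurable
  · refine Eventually.of_forall fun y hy s h => ?_
    have := hC (y, s) ⟨uIoc_subset_uIcc hy, Ioo_subset_Icc_self h⟩
    simpa [max_eq_left (show (0 : ℝ) ≤ s by linarith [h.1])] using this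
  · exact intervalIntegrable_const
  · exact Eventually.of_forall fun y _ s h => (hd y s (by linarith [h.1])).mul_const _

lemma continuous_Dcut (k : ℤ) : Continuous (Dcut k) := by
  have : Dcut k = fun x => max 0 (min 1 ((k : ℝ) + 2 - x)) := by
    funext x
    unfold Dcut
    split_ifs with h1 h2
    · rw [min_eq_left (by linarith), max_eq_right (by norm_num)]
    · rw [min_eq_right (by linarith), max_eq_right (by linarith)]
    · rw [min_eq_right (by linarith), max_eq_left (by linarith)]
  rw [this]
  fun_prop

lemma integral_Ioi_Dcut (k : ℤ) {x : ℝ} (hx : x ≤ (k : ℝ) + 1) (g : ℝ → ℝ) :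
    ∫ y in Ioi x, g y * Dcut k y = ∫ y in x..((k : ℝ) + 2), g y * Dcut k y := by
  rw [intervalIntegral.integral_of_le (by linarith)]
  refine setIntegral_eq_of_subset_of_forall_sdiff_eq_zero measurableSet_Ioi
    Ioc_subset_Ioi_self ?_
  rintro y ⟨hy1, hy2⟩
  have hy3 : (k : ℝ) + 2 < y := by
    by_contra h
    exact hy2 ⟨hy1, not_lt.mp h⟩
  simp [Dcut, not_le.mpr hy3, not_le.mpr (show (k : ℝ) + 1 < y by linarith)]

/-- Integration by parts against the cut-off, using `D = 1` on `[x,k+1]` and `D' = -1` on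
`[k+1,k+2]`. -/
lemma integral_deriv_mul_Dcut (k : ℤ) {x : ℝ} (hx : x ≤ (k : ℝ) + 1) {g g' : ℝ → ℝ}
    (hg : ∀ y, HasDerivAt g (g' y) y) (hg' : Continuous g') :
    ∫ y in x..((k : ℝ) + 2), g' y * Dcut k y
      = - g x + ∫ y in ((k : ℝ) + 1)..((k : ℝ) + 2), g y := by
  have hi : ∀ a b, IntervalIntegrable (fun y => g' y * Dcut k y) volume a b :=
    fun a b => (hg'.mul (continuous_Dcut k)).intervalIntegrable _ _
  rw [← intervalIntegral.integral_add_adjacent_intervals (hi x ((k : ℝ) + 1)) (hi _ _)]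
  have h1 : ∫ y in x..((k : ℝ) + 1), g' y * Dcut k y = g ((k : ℝ) + 1) - g x := by
    rw [← intervalIntegral.integral_eq_sub_of_hasDerivAt (fun y _ => hg y)
      (hg'.intervalIntegrable _ _)]
    refine intervalIntegral.integral_congr fun y hy => ?_
    rw [uIcc_of_le hx] at hy
    simp [Dcut, hy.2]
  have h2 : ∫ y in ((k : ℝ) + 1)..((k : ℝ) + 2), g' y * Dcut k y
      = ∫ y in ((k : ℝ) + 1)..((k : ℝ) + 2), ((k : ℝ) + 2 - y) * g' y := by
    refine intervalIntegral.integral_congr fun y hy => ?_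
    rw [uIcc_of_le (by linarith)] at hy
    dsimp only [Dcut]
    split_ifs with h3 h4
    · have : y = (k : ℝ) + 1 := le_antisymm h3 hy.1
      subst this
      ring
    · ring
    · exact absurd hy.2 h4
  have h3 := intervalIntegral.integral_mul_deriv_eq_deriv_mul
    (a := (k : ℝ) + 1) (b := (k : ℝ) + 2)
    (u := fun y => (k : ℝ) + 2 - y) (u' := fun _ => -1) (v := g) (v' := g')
    (fun y _ => by simpa using (hasDerivAt_id y).const_sub ((k : ℝ) + 2))
    (fun y _ => hg y) intervalIntegrable_const (hg'.intervalIntegrable _ _)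
  rw [h1, h2, h3]
  simp only [neg_mul, one_mul, intervalIntegral.integral_neg]
  ring

/-- Kazhikhov-type representation formula: for a smooth positive
solution of the Navier–Stokes system, for every `k ∈ ℤ`, `x ∈ [k,k+1]` and `t ≥ 0`,
`v(x,t) = B(x,t)Y(t) + (R/μ̃) ∫₀^t (B(x,t)Y(t))/(B(x,s)Y(s)) θ(x,s) ds`. -/
theorem stmt11
    (μ κ R cν β : ℝ)
    (hμ : 0 < μ) (hκ : 0 < κ) (hR : 0 < R) (hcν : 0 < cν) (hβ : 0 < β)
    (v u θ : ℝ → ℝ → ℝ)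
    (hsmooth : ContDiffOn ℝ (⊤ : ℕ∞)
      (fun p : ℝ × ℝ => (v p.1 p.2, u p.1 p.2, θ p.1 p.2)) (univ ×ˢ Ici 0))
    (hvpos : ∀ x t : ℝ, 0 ≤ t → 0 < v x t)
    (hθpos : ∀ x t : ℝ, 0 ≤ t → 0 < θ x t)
    (hNS : NSAll μ κ R cν β v u θ) :
    ∀ (k : ℤ) (x : ℝ), x ∈ Icc (k : ℝ) ((k : ℝ) + 1) → ∀ t : ℝ, 0 ≤ t →
      v x t = Bfun μ v u k x t * Yfun μ R v u θ k t
        + (R / μ) * ∫ s in (0 : ℝ)..t,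
            (Bfun μ v u k x t * Yfun μ R v u θ k t)
              / (Bfun μ v u k x s * Yfun μ R v u θ k s) * θ x s := by
  intro k x hx t ht
  have hv : ContDiffOn ℝ (⊤ : ℕ∞) (fun p : ℝ × ℝ => v p.1 p.2) halfPlane := hsmooth.fst
  have hu : ContDiffOn ℝ (⊤ : ℕ∞) (fun p : ℝ × ℝ => u p.1 p.2) halfPlane := hsmooth.snd.fst
  have hθ : ContDiffOn ℝ (⊤ : ℕ∞) (fun p : ℝ × ℝ => θ p.1 p.2) halfPlane := hsmooth.snd.snd
  have hv0 : ∀ p ∈ halfPlane, v p.1 p.2 ≠ 0 := fun p hp => (hvpos _ _ hp.2).ne'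
  have hp1 : ContDiffOn ℝ (⊤ : ℕ∞) (fun p : ℝ × ℝ => R * θ p.1 p.2 / v p.1 p.2) halfPlane :=
    (contDiffOn_const.mul hθ).div hv hv0
  have hp2 : ContDiffOn ℝ (⊤ : ℕ∞) (fun p : ℝ × ℝ => pdx u p.1 p.2 / v p.1 p.2) halfPlane :=
    (contDiffOn_pdx hu).div hv hv0
  set σ := sigmaNS μ R v u θ with hσdef
  have hσ_eq : ∀ y s, σ y s = μ * (pdx u y s / v y s) - R * θ y s / v y s := fun y s => by
    rw [hσdef, sigmaNS, mul_div_assoc]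
  have hσ : ContDiffOn ℝ (⊤ : ℕ∞) (fun p : ℝ × ℝ => σ p.1 p.2) halfPlane := by
    simp only [hσ_eq]
    exact (contDiffOn_const.mul hp2).sub hp1
  have hut : ∀ y s, 0 < s → HasDerivAt (fun r => u y r) (pdx σ y s) s := by
    intro y s hs
    have h := hasDerivAt_pdt hu y hs
    have h1 := ((hasDerivAt_pdx (f := fun y s => pdx u y s / v y s) hp2 y hs.le).const_mul μ).sub
      (hasDerivAt_pdx (f := fun y s => R * θ y s / v y s) hp1 y hs.le)
    have h2 : pdx σ y s = pdt u y s := by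
      have h3 := (hNS y s hs).2.1
      have h4 : pdx σ y s = μ * pdx (fun y s => pdx u y s / v y s) y s
          - pdx (fun y s => R * θ y s / v y s) y s := by
        have h5 : (fun y => σ y s)
            = (fun y => μ * (pdx u y s / v y s)) - fun y => R * θ y s / v y s :=
          funext fun y => hσ_eq y s
        rw [← h1.deriv, ← h5]
        rfl
      rw [h4]
      linarith
    rwa [h2]
  -- `A s` is the exponent integral of `B`, `g s` the time density in the exponent of `Y`.
  set A : ℝ → ℝ := fun s => ∫ y in x..((k : ℝ) + 2), (u y 0 - u y s) * Dcut k y with hA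
  set g : ℝ → ℝ := fun s => ∫ y in ((k : ℝ) + 1)..((k : ℝ) + 2), σ y (max s 0) with hg
  set E : ℝ → ℝ := fun s => v x 0 * Real.exp ((1 / μ) * (A s + ∫ r in (0 : ℝ)..s, g r)) with hE
  have hgc : Continuous g :=
    intervalIntegral.continuous_parametric_intervalIntegral_of_continuous'
      (f := fun s y => σ y (max s 0))
      ((continuous_comp_max hσ.continuousOn).comp continuous_swap) _ _
  have hBY : ∀ s, 0 ≤ s → Bfun μ v u k x s * Yfun μ R v u θ k s = E s := by
    intro s hs
    have h1 : ∫ r in (0 : ℝ)..s, ∫ y in ((k : ℝ) + 1)..((k : ℝ) + 2), σ y r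
        = ∫ r in (0 : ℝ)..s, g r := by
      refine intervalIntegral.integral_congr fun r hr => ?_
      rw [uIcc_of_le hs] at hr
      simp only [hg, max_eq_left hr.1]
    simp only [Bfun, Yfun, hE, hA]
    rw [integral_Ioi_Dcut k hx.2, ← hσdef, h1, mul_assoc, ← Real.exp_add, mul_add]
  have hvx0 : 0 < v x 0 := hvpos x 0 le_rfl
  have hEpos : ∀ s, 0 < E s := fun s => mul_pos hvx0 (Real.exp_pos _)
  have huc : ContinuousOn (fun p : ℝ × ℝ => u p.1 0 - u p.1 p.2) halfPlane :=
    ((continuous_slice hu.continuousOn le_rfl).comp continuous_fst).continuousOn.sub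
      hu.continuousOn
  have hAd : ∀ s, 0 < s → HasDerivAt A (σ x s - g s) s := by
    intro s hs
    have h := hasDerivAt_weighted_integral (f := fun y s => u y 0 - u y s)
      (f' := fun y s => - pdx σ y s) (continuous_Dcut k) huc
      (contDiffOn_pdx hσ).continuousOn.neg
      (fun y r hr => (hut y r hr).const_sub _) x ((k : ℝ) + 2) hs
    have h2 := integral_deriv_mul_Dcut k hx.2 (fun y => hasDerivAt_pdx hσ y hs.le)
      (continuous_slice (contDiffOn_pdx hσ).continuousOn hs.le)
    convert h using 1
    simp only [neg_mul, intervalIntegral.integral_neg, hg, max_eq_left hs.le]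
    rw [h2]
    ring
  have hAc : ContinuousOn A (Icc 0 t) := by
    have h : Continuous (fun s => ∫ y in x..((k : ℝ) + 2), (u y 0 - u y (max s 0)) * Dcut k y) :=
      intervalIntegral.continuous_parametric_intervalIntegral_of_continuous'
        (f := fun s y => (u y 0 - u y (max s 0)) * Dcut k y)
        (((continuous_comp_max (f := fun y s => u y 0 - u y s) huc).comp continuous_swap).mul
          ((continuous_Dcut k).comp continuous_snd)) _ _
    refine h.continuousOn.congr fun s hs => ?_
    simp only [hA, max_eq_left hs.1]
  have hMd : ∀ s, HasDerivAt (fun s => ∫ r in (0 : ℝ)..s, g r) (g s) s := fun s =>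
    intervalIntegral.integral_hasDerivAt_right (hgc.intervalIntegrable _ _)
      hgc.stronglyMeasurable.stronglyMeasurableAtFilter hgc.continuousAt
  have hMc : Continuous (fun s => ∫ r in (0 : ℝ)..s, g r) :=
    continuous_iff_continuousAt.mpr fun s => (hMd s).continuousAt
  have hEc : ContinuousOn E (Icc 0 t) :=
    continuousOn_const.mul
      (Real.continuous_exp.comp_continuousOn (continuousOn_const.mul (hAc.add hMc.continuousOn)))
  have hEd : ∀ s, 0 < s → HasDerivAt E (E s * ((1 / μ) * σ x s)) s := by
    intro s hs
    have h := ((((hAd s hs).add (hMd s)).const_mul (1 / μ)).exp).const_mul (v x 0)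
    refine h.congr_deriv ?_
    simp only [hE, Pi.add_apply]
    ring
  have htime : ∀ f : ℝ → ℝ → ℝ, ContinuousOn (fun p : ℝ × ℝ => f p.1 p.2) halfPlane →
      ContinuousOn (fun s => f x s) (Icc 0 t) := fun f hf =>
    hf.comp (f := fun s : ℝ => (x, s)) (by fun_prop) (fun s hs => mem_halfPlane hs.1)
  have hic : ContinuousOn (fun s => θ x s / E s) (Icc 0 t) :=
    (htime θ hθ.continuousOn).div hEc fun s _ => (hEpos s).ne'
  have hqd : ∀ s ∈ Ioo 0 t, HasDerivAt (fun s => v x s / E s) ((R / μ) * (θ x s / E s)) s := by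
    intro s hs
    have h := (hasDerivAt_pdt hv x hs.1).div (hEd s hs.1) (hEpos s).ne'
    refine h.congr_deriv ?_
    rw [(hNS x s hs.1).1, hσ_eq]
    have h1 := (hEpos s).ne'
    have h2 := (hvpos x s hs.1.le).ne'
    field_simp
    ring
  have hmain := intervalIntegral.integral_eq_sub_of_hasDerivAt_of_le (f := fun s => v x s / E s) ht
    ((htime v hv.continuousOn).div hEc fun s _ => (hEpos s).ne') hqd
    ((continuousOn_const.mul hic).intervalIntegrable_of_Icc ht)
  have hE0 : E 0 = v x 0 := by simp [hE, hA]
  have hint : ∫ s in (0 : ℝ)..t, (Bfun μ v u k x t * Yfun μ R v u θ k t)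
      / (Bfun μ v u k x s * Yfun μ R v u θ k s) * θ x s
      = E t * ∫ s in (0 : ℝ)..t, θ x s / E s := by
    rw [← intervalIntegral.integral_const_mul]
    refine intervalIntegral.integral_congr fun s hs => ?_
    rw [uIcc_of_le ht] at hs
    simp only [hBY t ht, hBY s hs.1]
    ring
  rw [hint, hBY t ht]
  rw [intervalIntegral.integral_const_mul, hE0, div_self hvx0.ne'] at hmain
  have h1 := (hEpos t).ne'
  calc v x t = E t * (v x t / E t) := by field_simp
    _ = E t * (1 + (R / μ) * ∫ s in (0 : ℝ)..t, θ x s / E s) := by rw [hmain]; ring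
    _ = _ := by ring
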